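/- For the elementary Nielsen automorphism φ (a ↦ ab, b ↦ b, c_j ↦ c_j) and any reduced word w such that w·b is reduced and w does not end in a⁻¹ (so that the displayed products are reduced), the image of the cylinder C¹_{w·b} under the boundary extension of φ equals the union C¹_{φ(w)·b} ∪ C¹_{φ(w)·a⁻¹}. -/

import Mathlib

open FreeGroup

variable {α : Type*}

/-- Inverse of a letter `(x, b)` in the alphabet `A ∪ A⁻¹`. -/
def linv (x : α × Bool) : α × Bool := (x.1, !x.2)

/-- The boundary `∂F(A)`: infinite reduced words over `A ∪ A⁻¹`. -/
def Bd (α : Type*) : Type _ := {ξ : ℕ → α × Bool // ∀ n, ξ (n + 1) ≠ linv (ξ n)}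

/-- The cylinder `C¹_w` of all infinite reduced words with prefix `w`. -/
def Cyl (w : List (α × Bool)) : Set (Bd α) :=
  {ξ | ∀ i, (h : i < w.length) → ξ.1 i = w.get ⟨i, h⟩}

/-- The length-`m` prefix of an infinite reduced word. -/
def pre (ξ : Bd α) (m : ℕ) : List (α × Bool) := List.ofFn (fun i : Fin m => ξ.1 i)

/-- `Φ` is the boundary extension of the automorphism `φ`:
for every `ξ ∈ ∂F(A)`, the reduced words `φ(ξ|_m)` converge to `Φ ξ`. -/
def ExtendsBd [DecidableEq α] (φ : FreeGroup α ≃* FreeGroup α) (Φ : Bd α → Bd α) : Prop :=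
  ∀ ξ : Bd α, ∀ k : ℕ, ∃ n : ℕ, ∀ m, n ≤ m →
    ((φ (FreeGroup.mk (pre ξ m))).toWord).take k = List.ofFn (fun i : Fin k => (Φ ξ).1 i)

/-- `Concat g ξ η` : `η` is the reduced concatenation `g · ξ` (left translation of a
boundary point by a group element): some terminal segment of (the reduced word of) `g`
cancels against an initial segment of `ξ`, and `η` is the concatenation of the rest. -/
def Concat [DecidableEq α] (g : FreeGroup α) (ξ η : Bd α) : Prop :=
  ∃ ℓ : ℕ, ∃ hℓ : ℓ ≤ g.toWord.length,
    (∀ i, (h : i < ℓ) → ξ.1 i = linv (g.toWord.get ⟨g.toWord.length - 1 - i, by omega⟩)) ∧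
    (∀ n : ℕ, η.1 n =
      if h : n < g.toWord.length - ℓ then g.toWord.get ⟨n, by omega⟩
      else ξ.1 (n - (g.toWord.length - ℓ) + ℓ))

/-- The vertex `g` of the Cayley tree lies on the bi-infinite geodesic from `ξ` to `η`. -/
def OnGeod [DecidableEq α] (g : FreeGroup α) (ξ η : Bd α) : Prop :=
  ∃ ξ' η' : Bd α, Concat g⁻¹ ξ ξ' ∧ Concat g⁻¹ η η' ∧ ξ'.1 0 ≠ η'.1 0

/-- The double cylinder `C²_{[v,w]}`. -/
def DblCyl [DecidableEq α] (v w : FreeGroup α) : Set (Bd α × Bd α) :=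
  {p | p.1 ≠ p.2 ∧ OnGeod v p.1 p.2 ∧ OnGeod w p.1 p.2}

/-- Letter-permuting automorphism: every generator maps to a single letter. -/
def IsPermAut [DecidableEq α] (φ : FreeGroup α ≃* FreeGroup α) : Prop :=
  ∀ x : α, ((φ (FreeGroup.of x)).toWord).length = 1

/-- Elementary Nielsen automorphism: `a ↦ ab`, all other generators fixed. -/
def IsNielsenAut (φ : FreeGroup α ≃* FreeGroup α) : Prop :=
  ∃ a b : α, a ≠ b ∧ φ (FreeGroup.of a) = FreeGroup.of a * FreeGroup.of b ∧
    ∀ x : α, x ≠ a → φ (FreeGroup.of x) = FreeGroup.of x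

/-! The Nielsen automorphism `φ` and its inverse move generators a bounded distance, so `φ` is a
quasi-isometry of the Cayley tree: far out along a geodesic the image stays far from the origin
while moving in bounded steps, and its initial letters freeze. This makes `φ⁻¹` extend to the
boundary, and makes the extension `Φ` of `φ` surjective. It therefore suffices to compute the
preimage under `Φ` of the two cylinders on the right.

On finite words, cancellation in `φ(g)` only occurs inside `(ab)b⁻¹` and `b(b⁻¹a⁻¹)`, so the first
letter of `g` can be read off from the first two letters of `φ(g)`: it is `b` exactly when `φ(g)`
begins with `b` or with `a⁻¹`. Applying this to `w⁻¹g` says that `g` begins with `wb` exactly when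
`φ(g)` begins with `φ(w)b` or with `φ(w)a⁻¹`, and letting `g` run through the prefixes of a boundary
point gives the preimage. -/

open Filter

variable {β : Type*}

section Words

lemma linv_linv (x : α × Bool) : linv (linv x) = x := by
  simp [linv]

lemma mk_cons (x : α × Bool) (L : List (α × Bool)) :
    FreeGroup.mk (x :: L) = FreeGroup.mk [x] * FreeGroup.mk L := by
  rw [mul_mk, List.singleton_append]

lemma mk_singleton_eq_of_or_inv (x : α × Bool) :
    FreeGroup.mk [x] = FreeGroup.of x.1 ∨ FreeGroup.mk [x] = (FreeGroup.of x.1)⁻¹ := by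
  rcases x with ⟨x, _ | _⟩
  · exact Or.inr rfl
  · exact Or.inl rfl

lemma eq_imp_eq_iff_ne_linv (x y : α × Bool) : (x.1 = y.1 → x.2 = y.2) ↔ y ≠ linv x := by
  rcases x with ⟨x, _ | _⟩ <;> rcases y with ⟨y, _ | _⟩ <;> simp [linv, eq_comm]

lemma isReduced_cons_iff {x : α × Bool} {L : List (α × Bool)} :
    IsReduced (x :: L) ↔ L.head? ≠ some (linv x) ∧ IsReduced L := by
  cases L with
  | nil => simp
  | cons y L => simp [isReduced_cons_cons, eq_imp_eq_iff_ne_linv]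

variable [DecidableEq α]

lemma toWord_mk_of_isReduced {L : List (α × Bool)} (hL : IsReduced L) :
    (FreeGroup.mk L).toWord = L := by
  rw [toWord_mk, hL.reduce_eq]

lemma norm_mk_of_isReduced {L : List (α × Bool)} (hL : IsReduced L) :
    (FreeGroup.mk L).norm = L.length := by
  rw [FreeGroup.norm, toWord_mk_of_isReduced hL]

lemma toWord_mk_singleton_mul (x : α × Bool) (g : FreeGroup α) :
    (FreeGroup.mk [x] * g).toWord =
      if g.toWord.head? = some (linv x) then g.toWord.tail else x :: g.toWord := by
  rw [toWord_mul, toWord_mk, reduce_singleton, List.singleton_append, reduce.cons, reduce_toWord]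
  cases g.toWord with
  | nil => simp
  | cons y L =>
    have hxy : (x.1 = y.1 ∧ x.2 = !y.2) ↔ y = linv x := by
      rcases x with ⟨x, _ | _⟩ <;> rcases y with ⟨y, _ | _⟩ <;> simp [linv, eq_comm]
    simp [hxy]

lemma toWord_mul_mk_singleton (g : FreeGroup α) (x : α × Bool) :
    (g * FreeGroup.mk [x]).toWord =
      if g⁻¹.toWord.head? = some x then g.toWord.dropLast else g.toWord ++ [x] := by
  have hinv : g * FreeGroup.mk [x] = (FreeGroup.mk [linv x] * g⁻¹)⁻¹ := by
    simp [inv_mk, invRev, linv]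
  rw [hinv, toWord_inv, toWord_mk_singleton_mul, linv_linv, apply_ite invRev]
  congr 1
  · simp [toWord_inv, invRev, List.tail_reverse, Function.comp_def]
  · rw [toWord_inv, ← List.singleton_append, invRev_append, invRev_invRev]
    simp [invRev, linv]

lemma toWord_mul_mk_singleton_eq_append_iff {g : FreeGroup α} {x : α × Bool} :
    (g * FreeGroup.mk [x]).toWord = g.toWord ++ [x] ↔ g⁻¹.toWord.head? ≠ some x := by
  rw [toWord_mul_mk_singleton]
  refine ⟨fun h hx => ?_, fun hx => if_neg hx⟩
  have hlen := congrArg List.length h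
  rw [if_pos hx, List.length_dropLast, List.length_append, List.length_singleton] at hlen
  omega

lemma prefix_toWord_mul_mk_singleton {P : List (α × Bool)} {g : FreeGroup α} (x : α × Bool)
    (hP : P <+: g.toWord) (hlt : P.length < g.norm) : P <+: (g * FreeGroup.mk [x]).toWord := by
  rw [toWord_mul_mk_singleton]
  split_ifs
  · rw [List.dropLast_eq_take, List.prefix_take_iff]
    exact ⟨hP, Nat.le_sub_one_of_lt hlt⟩
  · exact hP.trans (List.prefix_append _ _)

lemma norm_le_norm_mul_mk_singleton_add_one (g : FreeGroup α) (x : α × Bool) :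
    g.norm ≤ (g * FreeGroup.mk [x]).norm + 1 := by
  calc g.norm = (g * FreeGroup.mk [x] * (FreeGroup.mk [x])⁻¹).norm := by
        rw [mul_inv_cancel_right]
    _ ≤ (g * FreeGroup.mk [x]).norm + (FreeGroup.mk [x])⁻¹.norm := norm_mul_le _ _
    _ ≤ (g * FreeGroup.mk [x]).norm + 1 := by
        rw [norm_inv_eq]
        exact Nat.add_le_add_left norm_mk_le _

lemma prefix_toWord_mul_mk {P : List (α × Bool)} {g : FreeGroup α} (L : List (α × Bool))
    (hP : P <+: g.toWord) (hlen : P.length + L.length ≤ g.norm) :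
    P <+: (g * FreeGroup.mk L).toWord := by
  induction L generalizing g with
  | nil => rwa [← one_eq_mk, mul_one]
  | cons x L ih =>
    rw [List.length_cons] at hlen
    have hnorm := norm_le_norm_mul_mk_singleton_add_one g x
    rw [mk_cons, ← mul_assoc]
    exact ih (prefix_toWord_mul_mk_singleton x hP (by omega)) (by omega)

lemma prefix_toWord_mul {P : List (α × Bool)} {g h : FreeGroup α}
    (hP : P <+: g.toWord) (hlen : P.length + h.norm ≤ g.norm) : P <+: (g * h).toWord := by
  simpa only [mk_toWord] using prefix_toWord_mul_mk h.toWord hP hlen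

lemma toWord_mul_mk_singleton_prefix_iff {w g : FreeGroup α} {x : α × Bool}
    (hw : w⁻¹.toWord.head? ≠ some x) :
    (w * FreeGroup.mk [x]).toWord <+: g.toWord ↔ (w⁻¹ * g).toWord.head? = some x := by
  have hwx : (w * FreeGroup.mk [x]).toWord = w.toWord ++ [x] :=
    toWord_mul_mk_singleton_eq_append_iff.2 hw
  constructor
  · rintro ⟨t, ht⟩
    rw [hwx, List.append_assoc, List.singleton_append] at ht
    have hxt : IsReduced (x :: t) :=
      (isReduced_toWord (x := g)).infix ⟨w.toWord, [], by rw [List.append_nil, ht]⟩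
    have hg : w⁻¹ * g = FreeGroup.mk (x :: t) := by
      rw [inv_mul_eq_iff_eq_mul, ← mk_toWord (x := g), ← ht, ← mul_mk, mk_toWord]
    rw [hg, toWord_mk_of_isReduced hxt, List.head?_cons]
  · intro hx
    obtain ⟨t, ht⟩ := List.head?_eq_some_iff.1 hx
    have hred : IsReduced (w.toWord ++ [x] ++ t) :=
      IsReduced.append_overlap (hwx ▸ isReduced_toWord)
        (by rw [List.singleton_append, ← ht]; exact isReduced_toWord) (List.cons_ne_nil _ _)
    have hg : g = FreeGroup.mk (w.toWord ++ [x] ++ t) := by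
      rw [List.append_assoc, List.singleton_append, ← mul_mk, mk_toWord, ← ht, mk_toWord,
        mul_inv_cancel_left]
    rw [hwx, hg, toWord_mk_of_isReduced hred]
    exact List.prefix_append _ _

end Words

section Prefixes

lemma length_pre (ξ : Bd α) (m : ℕ) : (pre ξ m).length = m :=
  List.length_ofFn

lemma getElem_pre (ξ : Bd α) {m i : ℕ} (hi : i < (pre ξ m).length) : (pre ξ m)[i] = ξ.1 i :=
  List.getElem_ofFn hi

lemma isReduced_pre (ξ : Bd α) (m : ℕ) : IsReduced (pre ξ m) := by
  refine List.isChain_iff_getElem.2 fun i hi => ?_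
  rw [getElem_pre, getElem_pre, eq_imp_eq_iff_ne_linv]
  exact ξ.2 i

lemma take_pre (ξ : Bd α) {k m : ℕ} (hkm : k ≤ m) : (pre ξ m).take k = pre ξ k := by
  refine List.ext_getElem (by simp [length_pre, hkm]) fun i _ _ => ?_
  rw [List.getElem_take, getElem_pre, getElem_pre]

lemma pre_prefix_pre (ξ : Bd α) {k m : ℕ} (hkm : k ≤ m) : pre ξ k <+: pre ξ m :=
  take_pre ξ hkm ▸ List.take_prefix _ _

lemma mem_cyl_iff_pre_eq {ξ : Bd α} {L : List (α × Bool)} :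
    ξ ∈ Cyl L ↔ pre ξ L.length = L := by
  constructor
  · intro h
    refine List.ext_getElem (length_pre _ _) fun i _ hi => ?_
    rw [getElem_pre]
    exact h i hi
  · intro h i hi
    rw [List.get_eq_getElem, ← getElem_pre ξ (m := L.length) (by rwa [length_pre])]
    exact List.getElem_of_eq h _

lemma bd_ext {ξ η : Bd α} (h : ∀ k, pre ξ k = pre η k) : ξ = η := by
  refine Subtype.ext (funext fun n => ?_)
  rw [← getElem_pre ξ (m := n + 1) (by simp [length_pre]),
    ← getElem_pre η (m := n + 1) (by simp [length_pre])]
  exact List.getElem_of_eq (h (n + 1)) _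

end Prefixes

/-- Convergence of a sequence of words to a boundary point, in the topology of
`F(A) ∪ ∂F(A)`: every prefix of `ξ` is a prefix of almost all the words. -/
def TendstoBd (W : ℕ → List (α × Bool)) (ξ : Bd α) : Prop :=
  ∀ k, ∀ᶠ m in atTop, pre ξ k <+: W m

section Convergence

lemma tendstoBd_pre (ξ : Bd α) : TendstoBd (pre ξ) ξ := fun k =>
  (eventually_ge_atTop k).mono fun _ hm => pre_prefix_pre ξ hm

lemma TendstoBd.mem_cyl_iff {W : ℕ → List (α × Bool)} {ξ : Bd α} (h : TendstoBd W ξ)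
    {L : List (α × Bool)} : ξ ∈ Cyl L ↔ ∃ᶠ m in atTop, L <+: W m := by
  have hconst : ∀ᶠ m in atTop, (L <+: W m ↔ pre ξ L.length = L) := by
    filter_upwards [h L.length] with m hm
    rw [List.prefix_iff_eq_take] at hm ⊢
    rw [hm, length_pre, eq_comm]
  rw [mem_cyl_iff_pre_eq, frequently_congr hconst, frequently_const]

lemma TendstoBd.unique {W : ℕ → List (α × Bool)} {ξ η : Bd α} (hξ : TendstoBd W ξ)
    (hη : TendstoBd W η) : ξ = η := by
  refine bd_ext fun k => ?_
  obtain ⟨m, hξm, hηm⟩ := ((hξ k).and (hη k)).exists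
  exact List.prefix_of_prefix_length_le hξm hηm (by simp [length_pre])
    |>.eq_of_length (by simp [length_pre])

lemma exists_tendstoBd {W : ℕ → List (α × Bool)} (hW : ∀ m, IsReduced (W m))
    (hstab : ∀ k, ∃ P : List (α × Bool), P.length = k ∧ ∀ᶠ m in atTop, P <+: W m) :
    ∃ ξ, TendstoBd W ξ := by
  choose P hlen hP using hstab
  let letter (n : ℕ) : α × Bool := (P (n + 1))[n]'(by simp [hlen])
  have hletter {k n : ℕ} (hn : n < (P k).length) : (P k)[n] = letter n := by
    obtain ⟨m, hk, hn'⟩ := ((hP k).and (hP (n + 1))).exists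
    rw [hk.getElem hn, ← hn'.getElem]
  have hred (k : ℕ) : IsReduced (P k) := by
    obtain ⟨m, hm⟩ := (hP k).exists
    exact (hW m).infix hm.isInfix
  have hadj (n : ℕ) : letter (n + 1) ≠ linv (letter n) := by
    have h := List.isChain_iff_getElem.1 (hred (n + 2)) n (by simp [hlen])
    rwa [eq_imp_eq_iff_ne_linv, hletter, hletter] at h
  let ξ : Bd α := ⟨letter, hadj⟩
  refine ⟨ξ, fun k => ?_⟩
  have hpre : pre ξ k = P k :=
    List.ext_getElem (by rw [length_pre, hlen]) fun i _ hi => by rw [getElem_pre, hletter hi]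
  rw [hpre]
  exact hP k

lemma ExtendsBd.tendstoBd [DecidableEq α] {φ : FreeGroup α ≃* FreeGroup α} {Φ : Bd α → Bd α}
    (hΦ : ExtendsBd φ Φ) (ξ : Bd α) :
    TendstoBd (fun m => (φ (FreeGroup.mk (pre ξ m))).toWord) (Φ ξ) := by
  intro k
  filter_upwards [eventually_atTop.2 (hΦ ξ k)] with m hm
  rw [List.prefix_iff_eq_take, length_pre, hm, pre]

end Convergence

section QuasiIsometry

variable [DecidableEq β] {f : FreeGroup α →* FreeGroup β} {C D : ℕ}

lemma norm_map_mk_singleton_le (hC : ∀ x, (f (FreeGroup.of x)).norm ≤ C) (x : α × Bool) :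
    (f (FreeGroup.mk [x])).norm ≤ C := by
  rcases mk_singleton_eq_of_or_inv x with h | h
  · exact h ▸ hC x.1
  · rw [h, _root_.map_inv, norm_inv_eq]
    exact hC x.1

variable [DecidableEq α]

lemma norm_map_le (hC : ∀ x, (f (FreeGroup.of x)).norm ≤ C) (g : FreeGroup α) :
    (f g).norm ≤ C * g.norm := by
  have hword (L : List (α × Bool)) : (f (FreeGroup.mk L)).norm ≤ C * L.length := by
    induction L with
    | nil => rw [← one_eq_mk, _root_.map_one, FreeGroup.norm_one, List.length_nil, mul_zero]
    | cons x L ih =>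
      calc (f (FreeGroup.mk (x :: L))).norm
          ≤ (f (FreeGroup.mk [x])).norm + (f (FreeGroup.mk L)).norm := by
            rw [mk_cons, _root_.map_mul]
            exact norm_mul_le _ _
        _ ≤ C + C * L.length := add_le_add (norm_map_mk_singleton_le hC x) ih
        _ = C * (x :: L).length := by rw [List.length_cons]; ring
  simpa only [mk_toWord, FreeGroup.norm] using hword g.toWord

lemma prefix_toWord_map_mk_append (hC : ∀ x, (f (FreeGroup.of x)).norm ≤ C)
    (hD : ∀ g, g.norm ≤ D * (f g).norm) {U V : List (α × Bool)} (hUV : IsReduced (U ++ V))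
    {P : List (β × Bool)} (hlen : D * (P.length + C) < U.length)
    (hP : P <+: (f (FreeGroup.mk U)).toWord) : P <+: (f (FreeGroup.mk (U ++ V))).toWord := by
  induction V using List.reverseRecOn with
  | nil => rwa [List.append_nil]
  | append_singleton V x ih =>
    rw [← List.append_assoc] at hUV ⊢
    have hred : IsReduced (U ++ V) := hUV.infix (List.prefix_append _ _).isInfix
    have hfar : P.length + C < (f (FreeGroup.mk (U ++ V))).norm := by
      refine lt_of_mul_lt_mul_left (a := D) ?_ (Nat.zero_le D)
      calc D * (P.length + C) < U.length := hlen
        _ ≤ (U ++ V).length := (List.prefix_append _ _).length_le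
        _ = (FreeGroup.mk (U ++ V)).norm := (norm_mk_of_isReduced hred).symm
        _ ≤ D * (f (FreeGroup.mk (U ++ V))).norm := hD _
    have hstep := norm_map_mk_singleton_le hC x
    rw [← mul_mk, _root_.map_mul]
    exact prefix_toWord_mul (ih hred) (by omega)

lemma exists_tendstoBd_map (hC : ∀ x, (f (FreeGroup.of x)).norm ≤ C)
    (hD : ∀ g, g.norm ≤ D * (f g).norm) (η : Bd α) :
    ∃ ξ, TendstoBd (fun m => (f (FreeGroup.mk (pre η m))).toWord) ξ := by
  refine exists_tendstoBd (fun _ => isReduced_toWord) fun k => ?_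
  set N := D * (k + C) + 1
  have hfar : k + C < (f (FreeGroup.mk (pre η N))).norm := by
    refine lt_of_mul_lt_mul_left (a := D) ?_ (Nat.zero_le D)
    calc D * (k + C) < N := Nat.lt_succ_self _
      _ = (FreeGroup.mk (pre η N)).norm := by
          rw [norm_mk_of_isReduced (isReduced_pre η N), length_pre]
      _ ≤ D * (f (FreeGroup.mk (pre η N))).norm := hD _
  have hk : ((f (FreeGroup.mk (pre η N))).toWord.take k).length = k :=
    List.length_take_of_le ((Nat.le_add_right k C).trans hfar.le)
  refine ⟨_, hk, (eventually_ge_atTop N).mono fun m hm => ?_⟩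
  obtain ⟨V, hV⟩ := pre_prefix_pre η hm
  rw [← hV]
  refine prefix_toWord_map_mk_append hC hD (hV ▸ isReduced_pre η m) ?_ (List.take_prefix _ _)
  rw [hk, length_pre]
  exact Nat.lt_succ_self _

lemma TendstoBd.map (hC : ∀ x, (f (FreeGroup.of x)).norm ≤ C)
    (hD : ∀ g, g.norm ≤ D * (f g).norm) {U : ℕ → List (α × Bool)} (hred : ∀ m, IsReduced (U m))
    {ξ : Bd α} (hU : TendstoBd U ξ) {ζ : Bd β}
    (hζ : TendstoBd (fun m => (f (FreeGroup.mk (pre ξ m))).toWord) ζ) :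
    TendstoBd (fun m => (f (FreeGroup.mk (U m))).toWord) ζ := by
  intro k
  obtain ⟨j, hj, hfar⟩ := ((hζ k).and (eventually_gt_atTop (D * (k + C)))).exists
  filter_upwards [hU j] with m ⟨V, hV⟩
  rw [← hV]
  exact prefix_toWord_map_mk_append hC hD (hV ▸ hred m) (by rwa [length_pre, length_pre]) hj

lemma ExtendsBd.surjective {φ : FreeGroup α ≃* FreeGroup α} {Φ : Bd α → Bd α}
    (hΦ : ExtendsBd φ Φ) (hC : ∀ x, (φ (FreeGroup.of x)).norm ≤ C)
    (hD : ∀ x, (φ.symm (FreeGroup.of x)).norm ≤ D) : Function.Surjective Φ := by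
  intro η
  have hφ (g : FreeGroup α) : g.norm ≤ D * (φ g).norm := by
    simpa using norm_map_le (f := φ.symm.toMonoidHom) hD (φ g)
  have hψ (g : FreeGroup α) : g.norm ≤ C * (φ.symm g).norm := by
    simpa using norm_map_le (f := φ.toMonoidHom) hC (φ.symm g)
  obtain ⟨ξ, hξ⟩ := exists_tendstoBd_map (f := φ.symm.toMonoidHom) hD hψ η
  have hlim := hξ.map (f := φ.toMonoidHom) hC hφ (fun _ => isReduced_toWord) (hΦ.tendstoBd ξ)
  refine ⟨ξ, hlim.unique ?_⟩
  simpa [mk_toWord, -toWord_mk, toWord_mk_of_isReduced (isReduced_pre η _)] using tendstoBd_pre η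

end QuasiIsometry

section Nielsen

/-- `φ` is the elementary Nielsen automorphism `a ↦ ab` attached to the generators `a` and `b`
(in `IsNielsenAut` the two generators are existentially quantified). -/
structure IsNielsenMap (a b : α) (φ : FreeGroup α ≃* FreeGroup α) : Prop where
  ne : a ≠ b
  map_of_self : φ (FreeGroup.of a) = FreeGroup.of a * FreeGroup.of b
  map_of_ne : ∀ x : α, x ≠ a → φ (FreeGroup.of x) = FreeGroup.of x

variable [DecidableEq α]

/-- The first letter of `g`, read off from the reduced word `S` of the image `φ(g)` under the
Nielsen automorphism `φ : a ↦ ab`: a leading `a⁻¹` is what remains of `φ(ba⁻¹) = b · b⁻¹a⁻¹`, and a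
leading `b⁻¹a⁻¹` is `φ(a⁻¹)`. The value is `none` when `g = 1`. -/
def nielsenHead (a b : α) (S : List (α × Bool)) : Option (α × Bool) :=
  if S.head? = some (a, false) then some (b, true)
  else if [(b, false), (a, false)] <+: S then some (a, false)
  else S.head?

lemma nielsenHead_cons {a b : α} (x : α × Bool) (S : List (α × Bool)) :
    nielsenHead a b (x :: S) =
      if x = (a, false) then some (b, true)
      else if x = (b, false) ∧ S.head? = some (a, false) then some (a, false)
      else some x := by
  cases S <;> simp [nielsenHead, eq_comm]

lemma nielsenHead_eq_some_iff {a b : α} {S : List (α × Bool)} :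
    nielsenHead a b S = some (b, true) ↔
      S.head? = some (b, true) ∨ S.head? = some (a, false) := by
  cases S with
  | nil => simp [nielsenHead]
  | cons x S =>
    rw [nielsenHead_cons]
    split_ifs with hxa hxb
    · simp [hxa]
    · simpa [hxb.1] using hxa
    · simp [hxa]

lemma nielsenHead_toWord_mk_singleton_mul {a b : α} {x : α × Bool} (hxa : x.1 ≠ a)
    {g : FreeGroup α} (hx : nielsenHead a b g.toWord ≠ some (linv x)) :
    nielsenHead a b (FreeGroup.mk [x] * g).toWord = some x := by
  rw [toWord_mk_singleton_mul]
  split_ifs with hcancel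
  · obtain ⟨T, hT⟩ := List.head?_eq_some_iff.1 hcancel
    rw [hT, nielsenHead_cons, if_neg fun h => hxa (congrArg Prod.fst h :), ite_ne_right_iff] at hx
    obtain ⟨⟨hxb, hTa⟩, -⟩ := hx
    have hxb' : x = (b, true) := by rw [← linv_linv x, hxb, linv, Bool.not_false]
    rw [hT, List.tail_cons, nielsenHead, if_pos hTa, hxb']
  · have hinv : ¬(x = (b, false) ∧ g.toWord.head? = some (a, false)) := by
      rintro ⟨rfl, hga⟩
      exact hx (if_pos hga)
    rw [nielsenHead_cons, if_neg fun h => hxa (congrArg Prod.fst h), if_neg hinv]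

lemma nielsenHead_toWord_of_mul_of_mul {a b : α} (hab : a ≠ b) {g : FreeGroup α}
    (hg : nielsenHead a b g.toWord ≠ some (a, false)) :
    nielsenHead a b (FreeGroup.of a * FreeGroup.of b * g).toWord = some (a, true) := by
  have hbg : (FreeGroup.mk [(b, true)] * g).toWord.head? ≠ some (a, false) := by
    rw [toWord_mk_singleton_mul]
    split_ifs with hcancel
    · obtain ⟨T, hT⟩ := List.head?_eq_some_iff.1 hcancel
      rw [hT, nielsenHead_cons] at hg
      rw [hT, List.tail_cons]
      exact fun hTa => hg (by simp [linv, hTa, hab.symm])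
    · simp
  have hword : (FreeGroup.of a * FreeGroup.of b * g).toWord =
      (a, true) :: (FreeGroup.mk [(b, true)] * g).toWord := by
    rw [mul_assoc, FreeGroup.of, FreeGroup.of, toWord_mk_singleton_mul]
    exact if_neg hbg
  rw [hword, nielsenHead_cons, if_neg (by simp), if_neg (by simp)]

lemma nielsenHead_toWord_of_mul_of_inv_mul {a b : α} (hab : a ≠ b) {g : FreeGroup α}
    (hg : nielsenHead a b g.toWord ≠ some (a, true)) :
    nielsenHead a b ((FreeGroup.of a * FreeGroup.of b)⁻¹ * g).toWord = some (a, false) := by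
  have hga : g.toWord.head? ≠ some (a, true) := fun h => by
    obtain ⟨T, hT⟩ := List.head?_eq_some_iff.1 h
    exact hg (by simp [hT, nielsenHead_cons])
  have hword : ((FreeGroup.of a * FreeGroup.of b)⁻¹ * g).toWord =
      (b, false) :: (a, false) :: g.toWord := by
    have hinv : (FreeGroup.of a * FreeGroup.of b)⁻¹ =
        FreeGroup.mk [(b, false)] * FreeGroup.mk [(a, false)] := rfl
    have ha : (FreeGroup.mk [(a, false)] * g).toWord = (a, false) :: g.toWord := by
      rw [toWord_mk_singleton_mul]
      exact if_neg hga
    rw [hinv, mul_assoc, toWord_mk_singleton_mul, ha]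
    exact if_neg (by simp [linv, hab])
  rw [hword, nielsenHead_cons, if_neg (by simp [hab.symm]), if_pos ⟨rfl, rfl⟩]

variable {a b : α} {φ : FreeGroup α ≃* FreeGroup α}

lemma IsNielsenMap.nielsenHead_toWord_map_mk_singleton_mul (hN : IsNielsenMap a b φ) {x : α × Bool}
    {g : FreeGroup α} (hx : nielsenHead a b g.toWord ≠ some (linv x)) :
    nielsenHead a b (φ (FreeGroup.mk [x]) * g).toWord = some x := by
  by_cases hxa : x.1 = a
  · obtain ⟨y, _ | _⟩ := x <;> obtain rfl : y = a := hxa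
    · have hinv : φ (FreeGroup.mk [(y, false)]) = (FreeGroup.of y * FreeGroup.of b)⁻¹ := by
        rw [← hN.map_of_self, ← _root_.map_inv]
        rfl
      rw [hinv]
      exact nielsenHead_toWord_of_mul_of_inv_mul hN.ne hx
    · have hof : φ (FreeGroup.mk [(y, true)]) = FreeGroup.of y * FreeGroup.of b := hN.map_of_self
      rw [hof]
      exact nielsenHead_toWord_of_mul_of_mul hN.ne hx
  · have hfix : φ (FreeGroup.mk [x]) = FreeGroup.mk [x] := by
      rcases mk_singleton_eq_of_or_inv x with h | h
      · rw [h, hN.map_of_ne x.1 hxa]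
      · rw [h, _root_.map_inv, hN.map_of_ne x.1 hxa]
    rw [hfix]
    exact nielsenHead_toWord_mk_singleton_mul hxa hx

lemma IsNielsenMap.nielsenHead_toWord_map (hN : IsNielsenMap a b φ) (g : FreeGroup α) :
    nielsenHead a b (φ g).toWord = g.toWord.head? := by
  suffices hword : ∀ L : List (α × Bool), IsReduced L →
      nielsenHead a b (φ (FreeGroup.mk L)).toWord = L.head? by
    simpa only [mk_toWord] using hword g.toWord isReduced_toWord
  intro L hL
  induction L with
  | nil => rw [← one_eq_mk, _root_.map_one, toWord_one]; simp [nielsenHead]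
  | cons x L ih =>
    obtain ⟨hx, hL⟩ := isReduced_cons_iff.1 hL
    rw [mk_cons, _root_.map_mul, List.head?_cons]
    exact hN.nielsenHead_toWord_map_mk_singleton_mul (by rwa [ih hL])

lemma IsNielsenMap.head?_toWord_eq_iff (hN : IsNielsenMap a b φ) (g : FreeGroup α) :
    g.toWord.head? = some (b, true) ↔
      (φ g).toWord.head? = some (b, true) ∨ (φ g).toWord.head? = some (a, false) := by
  rw [← hN.nielsenHead_toWord_map g, nielsenHead_eq_some_iff]

lemma IsNielsenMap.toWord_mul_of_prefix_iff (hN : IsNielsenMap a b φ) {w : FreeGroup α}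
    (hw : w⁻¹.toWord.head? ≠ some (b, true)) (g : FreeGroup α) :
    (w * FreeGroup.of b).toWord <+: g.toWord ↔
      (φ w * FreeGroup.of b).toWord <+: (φ g).toWord ∨
        (φ w * (FreeGroup.of a)⁻¹).toWord <+: (φ g).toWord := by
  have hhead := hN.head?_toWord_eq_iff
  have hφw := hw
  rw [Ne, hhead, _root_.map_inv, not_or] at hφw
  calc (w * FreeGroup.of b).toWord <+: g.toWord
      ↔ (w⁻¹ * g).toWord.head? = some (b, true) := toWord_mul_mk_singleton_prefix_iff hw
    _ ↔ ((φ w)⁻¹ * φ g).toWord.head? = some (b, true) ∨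
          ((φ w)⁻¹ * φ g).toWord.head? = some (a, false) := by
        rw [hhead, _root_.map_mul, _root_.map_inv]
    _ ↔ _ := or_congr (toWord_mul_mk_singleton_prefix_iff hφw.1).symm
        (toWord_mul_mk_singleton_prefix_iff hφw.2).symm

lemma IsNielsenMap.symm_of (hN : IsNielsenMap a b φ) (x : α) :
    φ.symm (FreeGroup.of x) =
      if x = a then FreeGroup.of a * (FreeGroup.of b)⁻¹ else FreeGroup.of x := by
  rw [MulEquiv.symm_apply_eq]
  split_ifs with hx
  · rw [hx, _root_.map_mul, _root_.map_inv, hN.map_of_self, hN.map_of_ne b hN.ne.symm,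
      mul_inv_cancel_right]
  · rw [hN.map_of_ne x hx]

lemma IsNielsenMap.surjective (hN : IsNielsenMap a b φ) {Φ : Bd α → Bd α}
    (hΦ : ExtendsBd φ Φ) : Function.Surjective Φ := by
  refine hΦ.surjective (C := 2) (D := 2) (fun x => ?_) fun x => ?_
  · by_cases hx : x = a
    · rw [hx, hN.map_of_self]
      simpa only [norm_of] using norm_mul_le (FreeGroup.of a) (FreeGroup.of b)
    · rw [hN.map_of_ne x hx, norm_of]
      exact one_le_two
  · rw [hN.symm_of]
    split_ifs
    · simpa only [norm_inv_eq, norm_of] using norm_mul_le (FreeGroup.of a) (FreeGroup.of b)⁻¹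
    · rw [norm_of]
      exact one_le_two

lemma IsNielsenMap.preimage_cyl_union (hN : IsNielsenMap a b φ) {Φ : Bd α → Bd α}
    (hΦ : ExtendsBd φ Φ) {w : FreeGroup α} (hw : w⁻¹.toWord.head? ≠ some (b, true)) :
    Φ ⁻¹' (Cyl (φ w * FreeGroup.of b).toWord ∪ Cyl (φ w * (FreeGroup.of a)⁻¹).toWord) =
      Cyl (w * FreeGroup.of b).toWord := by
  ext ξ
  rw [Set.mem_preimage, Set.mem_union, (hΦ.tendstoBd ξ).mem_cyl_iff,
    (hΦ.tendstoBd ξ).mem_cyl_iff, (tendstoBd_pre ξ).mem_cyl_iff, ← frequently_or_distrib]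
  refine frequently_congr (Eventually.of_forall fun m => ?_)
  rw [← hN.toWord_mul_of_prefix_iff hw, toWord_mk_of_isReduced (isReduced_pre ξ m)]

end Nielsen

theorem stmt1_general [DecidableEq α] (a b : α) (hab : a ≠ b)
    (φ : FreeGroup α ≃* FreeGroup α)
    (hφa : φ (FreeGroup.of a) = FreeGroup.of a * FreeGroup.of b)
    (hφ : ∀ x : α, x ≠ a → φ (FreeGroup.of x) = FreeGroup.of x)
    (Φ : Bd α → Bd α) (hΦ : ExtendsBd φ Φ)
    (w : FreeGroup α)
    (hred : (w * FreeGroup.of b).toWord = w.toWord ++ [(b, true)]) :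
    Φ '' Cyl ((w * FreeGroup.of b).toWord) =
      Cyl ((φ w * FreeGroup.of b).toWord) ∪ Cyl ((φ w * (FreeGroup.of a)⁻¹).toWord) := by
  have hw : w⁻¹.toWord.head? ≠ some (b, true) :=
    toWord_mul_mk_singleton_eq_append_iff.1 hred
  have hN : IsNielsenMap a b φ := ⟨hab, hφa, hφ⟩
  rw [← hN.preimage_cyl_union hΦ hw]
  exact Set.image_preimage_eq _ (hN.surjective hΦ)

/-- Nielsen automorphism `a ↦ ab`: `φ(C¹_{w·b}) = C¹_{φ(w)·b} ∪ C¹_{φ(w)·a⁻¹}`. -/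
theorem stmt1 [DecidableEq α] [Nontrivial α] (a b : α) (hab : a ≠ b)
    (φ : FreeGroup α ≃* FreeGroup α)
    (hφa : φ (FreeGroup.of a) = FreeGroup.of a * FreeGroup.of b)
    (hφ : ∀ x : α, x ≠ a → φ (FreeGroup.of x) = FreeGroup.of x)
    (Φ : Bd α → Bd α) (hΦ : ExtendsBd φ Φ)
    (w : FreeGroup α)
    (hred : (w * FreeGroup.of b).toWord = w.toWord ++ [(b, true)])
    (hlast : w.toWord.getLast? ≠ some (a, false)) :
    Φ '' Cyl ((w * FreeGroup.of b).toWord) =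
      Cyl ((φ w * FreeGroup.of b).toWord) ∪ Cyl ((φ w * (FreeGroup.of a)⁻¹).toWord) :=
  stmt1_general a b hab φ hφa hφ Φ hΦ w hred
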